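/- arXiv:math/0611762 — 4 statements merged into one kernel-verified Lean document; each statement's English description precedes it below -/
import Mathlib

section
/- Let n be a positive integer, let x and a be integers with 0 < x < −a (so a ≤ −2), and let H2 > 0 be a real number. Then (n·x/(1 − n·a))·(H2/2) < (−x/a)·(H2/2), so the open interval ((n·x/(1 − n·a))·(H2/2), (−x/a)·(H2/2)) is nonempty; and for every real number z in this interval the following three inequalities hold simultaneously: n·(x·H2 + 2·z·a) − 2·z < 0, n·(x·H2 + 2·z·a) − H2 < 0, and x·H2 + 2·z·a > 0. -/
/-!
With `a = α·H` and the variable `H` standing for the number `H²`, `x * H + 2 * z * a` is the degree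
`D · J²`; here `σ² · J = 0`, since the canonical class of an Enriques surface is
numerically trivial. Each of the outer inequalities is linear in `z` and amounts to one endpoint
of the interval. The middle one follows from them: positivity of the degree together with `x ≤ -a`
forces `2 * z < H`, so `n` times the degree is less than `2 * z` and hence less than `H`.
-/

section OrderedField

variable {K : Type*} [Field K] [LinearOrder K] [IsStrictOrderedRing K] {n x a H z : K}

theorem mul_degree_sub_two_mul_neg_iff (hna : n * a < 1) :
    n * (x * H + 2 * z * a) - 2 * z < 0 ↔ n * x / (1 - n * a) * (H / 2) < z := by
  rw [div_mul_eq_mul_div, div_lt_iff₀ (sub_pos.mpr hna)]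
  constructor <;> intro h <;> linarith

theorem degree_pos_iff (ha : a < 0) :
    0 < x * H + 2 * z * a ↔ z < -x / a * (H / 2) := by
  rw [div_mul_eq_mul_div, lt_div_iff_of_neg ha]
  constructor <;> intro h <;> linarith

theorem lower_endpoint_lt_upper_endpoint (hna : n * a < 1) (ha : a < 0) (hx : 0 < x)
    (hH : 0 < H) : n * x / (1 - n * a) * (H / 2) < -x / a * (H / 2) := by
  refine mul_lt_mul_of_pos_right ?_ (half_pos hH)
  rw [lt_div_iff_of_neg ha, div_mul_eq_mul_div, lt_div_iff₀ (sub_pos.mpr hna)]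
  linarith

end OrderedField

theorem two_mul_lt_of_degree_pos {R : Type*} [CommRing R] [LinearOrder R] [IsStrictOrderedRing R]
    {x a H z : R} (ha : a < 0) (hxa : x ≤ -a) (hH : 0 ≤ H) (hdeg : 0 < x * H + 2 * z * a) :
    2 * z < H := by
  refine lt_of_mul_lt_mul_right ?_ (neg_pos.mpr ha).le
  calc
    2 * z * -a < x * H := by linarith
    _ ≤ -a * H := mul_le_mul_of_nonneg_right hxa hH
    _ = H * -a := mul_comm _ _

theorem enriques_stability_range_x_pos_general {K : Type*} [Field K] [LinearOrder K]
    [IsStrictOrderedRing K] {n x a H : K} (hna : n * a < 1) (hx : 0 < x) (hxa : x ≤ -a)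
    (hH : 0 < H) :
    n * x / (1 - n * a) * (H / 2) < -x / a * (H / 2) ∧
    ∀ z : K, (n * x / (1 - n * a) * (H / 2) < z ∧ z < -x / a * (H / 2)) ↔
      (n * (x * H + 2 * z * a) - 2 * z < 0 ∧
      n * (x * H + 2 * z * a) - H < 0 ∧
      0 < x * H + 2 * z * a) := by
  have ha : a < 0 := neg_pos.mp (hx.trans_le hxa)
  refine ⟨lower_endpoint_lt_upper_endpoint hna ha hx hH, fun z => ?_⟩
  rw [← mul_degree_sub_two_mul_neg_iff hna, ← degree_pos_iff ha]
  refine ⟨fun ⟨hn, hdeg⟩ => ⟨hn, ?_, hdeg⟩, fun ⟨hn, _, hdeg⟩ => ⟨hn, hdeg⟩⟩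
  have hz : 2 * z < H := two_mul_lt_of_degree_pos ha hxa hH.le hdeg
  exact sub_neg.mpr ((sub_neg.mp hn).trans hz)

/-- Numerical core of Proposition 4.2(i): for `0 < x < -a` and `H2 > 0`, the interval
`((n·x/(1 − n·a))·(H2/2), (−x/a)·(H2/2))` is nonempty, and every `z` in it satisfies
the three slope inequalities. -/
theorem enriques_stability_range_x_pos (n : ℕ) (hn : 0 < n) (x a : ℤ)
    (hx : 0 < x) (hxa : x < -a) (H2 : ℝ) (hH2 : 0 < H2) :
    ((n : ℝ) * x / (1 - n * a)) * (H2 / 2) < (-(x : ℝ) / a) * (H2 / 2) ∧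
    ∀ z : ℝ, ((n : ℝ) * x / (1 - n * a)) * (H2 / 2) < z →
      z < (-(x : ℝ) / a) * (H2 / 2) →
      (n : ℝ) * ((x : ℝ) * H2 + 2 * z * a) - 2 * z < 0 ∧
      (n : ℝ) * ((x : ℝ) * H2 + 2 * z * a) - H2 < 0 ∧
      (x : ℝ) * H2 + 2 * z * a > 0 := by
  have ha : a < 0 := neg_pos.mp (hx.trans hxa)
  have hna : (n : ℤ) * a < 1 := (mul_neg_of_pos_of_neg (mod_cast hn) ha).trans one_pos
  have hrange := enriques_stability_range_x_pos_general (K := ℝ) (n := n) (x := x) (a := a)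
    (mod_cast hna) (mod_cast hx) (mod_cast hxa.le) hH2
  exact ⟨hrange.1, fun z hlower hupper => (hrange.2 z).mp ⟨hlower, hupper⟩⟩
end

section
/- Let n be a positive integer, let x and a be integers with −a < x < 0 (so a ≥ 2), and let H2 > 0 be a real number. Then ((−x)/a)·(H2/2) < (n·x/(1 − n·a))·(H2/2), so the open interval (((−x)/a)·(H2/2), (n·x/(1 − n·a))·(H2/2)) is nonempty; and for every real number z in this interval the following three inequalities hold simultaneously: n·(x·H2 + 2·z·a) − 2·z < 0, n·(x·H2 + 2·z·a) − H2 < 0, and x·H2 + 2·z·a > 0. -/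
/-!
As a function of `z`, the degree `d = D · J² = x * H2 + 2 * z * a` is affine with positive slope
`2 * a`, so `0 < d` is a lower bound on `z`. As `n * a > 1`, the inequality `n * d < 2 * z` is an
upper bound on `z`, and the gap between the two bounds is `x / (a * (1 - n * a)) * (H2 / 2)`, a
positive number because both `x` and `1 - n * a` are negative. The remaining inequality
`n * d < H2` follows from `n * d < 2 * z` once the upper bound is at most `H2 / 2`, which amounts
to `1 ≤ n * (a + x)`. For integral parameters this says just that `n * (a + x)` is positive.
-/

section

variable {K : Type*} [Field K] [LinearOrder K] [IsStrictOrderedRing K] {n x a H2 z : K}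

/-- The degree `D · J²` of the divisor `D = xσ + π*α` with respect to the polarization
`J = zσ + π*H`, where `a = α · H` and `H2 = H²`. On an elliptic threefold over an Enriques surface
`σ²` is numerically zero, and only the terms `x * H2` and `2 * z * a` of the product survive. -/
def polarizationDegree (x a H2 z : K) : K := x * H2 + 2 * z * a

theorem polarizationDegree_pos_iff (ha : 0 < a) :
    0 < polarizationDegree x a H2 z ↔ -x / a * (H2 / 2) < z := by
  rw [div_mul_eq_mul_div, div_lt_iff₀ ha, polarizationDegree]
  constructor <;> intro h <;> linarith

theorem mul_polarizationDegree_sub_two_mul_neg_iff (hna : 1 < n * a) :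
    n * polarizationDegree x a H2 z - 2 * z < 0 ↔ z < n * x / (1 - n * a) * (H2 / 2) := by
  rw [div_mul_eq_mul_div, lt_div_iff_of_neg (sub_neg.2 hna), polarizationDegree]
  constructor <;> intro h <;> linarith

theorem neg_div_lt_mul_div_one_sub_mul (hx : x < 0) (ha : 0 < a) (hna : 1 < n * a) :
    -x / a < n * x / (1 - n * a) := by
  have hden : 1 - n * a < 0 := sub_neg.2 hna
  have hgap : n * x / (1 - n * a) - -x / a = x / (a * (1 - n * a)) := by
    field_simp [hden.ne]
    ring
  rw [← sub_pos, hgap]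
  exact div_pos_of_neg_of_neg hx (mul_neg_of_pos_of_neg ha hden)

theorem mul_div_one_sub_mul_le_one (hna : 1 < n * a) (hnax : 1 ≤ n * (a + x)) :
    n * x / (1 - n * a) ≤ 1 := by
  rw [div_le_one_of_neg (sub_neg.2 hna)]
  linarith

theorem enriques_stability_range_x_neg_general (hn : 0 < n) (hx : x < 0)
    (hnax : 1 ≤ n * (a + x)) (hH2 : 0 < H2) :
    -x / a * (H2 / 2) < n * x / (1 - n * a) * (H2 / 2) ∧
    ∀ z, z ∈ Set.Ioo (-x / a * (H2 / 2)) (n * x / (1 - n * a) * (H2 / 2)) ↔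
      n * polarizationDegree x a H2 z - 2 * z < 0 ∧
      n * polarizationDegree x a H2 z - H2 < 0 ∧
      0 < polarizationDegree x a H2 z := by
  have hna : 1 < n * a := hnax.trans_lt (mul_lt_mul_of_pos_left (by linarith) hn)
  have ha : 0 < a := pos_of_mul_pos_right (one_pos.trans hna) hn.le
  have hupper : n * x / (1 - n * a) * (H2 / 2) ≤ H2 / 2 :=
    mul_le_of_le_one_left (half_pos hH2).le (mul_div_one_sub_mul_le_one hna hnax)
  refine ⟨mul_lt_mul_of_pos_right (neg_div_lt_mul_div_one_sub_mul hx ha hna) (half_pos hH2),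
    fun z ↦ ?_⟩
  rw [Set.mem_Ioo, ← polarizationDegree_pos_iff ha,
    ← mul_polarizationDegree_sub_two_mul_neg_iff hna]
  refine ⟨fun ⟨hpos, htwo⟩ ↦ ⟨htwo, ?_, hpos⟩, fun ⟨htwo, _, hpos⟩ ↦ ⟨hpos, htwo⟩⟩
  have hz : z < H2 / 2 :=
    ((mul_polarizationDegree_sub_two_mul_neg_iff hna).1 htwo).trans_le hupper
  linarith

end

/-- Numerical core of Proposition 4.2(ii): for `−a < x < 0` and `H2 > 0`, the interval
`(((−x)/a)·(H2/2), (n·x/(1 − n·a))·(H2/2))` is nonempty, and every `z` in it satisfies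
the three slope inequalities. -/
theorem enriques_stability_range_x_neg (n : ℕ) (hn : 0 < n) (x a : ℤ)
    (hax : -a < x) (hx : x < 0) (H2 : ℝ) (hH2 : 0 < H2) :
    (-(x : ℝ) / a) * (H2 / 2) < ((n : ℝ) * x / (1 - n * a)) * (H2 / 2) ∧
    ∀ z : ℝ, (-(x : ℝ) / a) * (H2 / 2) < z →
      z < ((n : ℝ) * x / (1 - n * a)) * (H2 / 2) →
      (n : ℝ) * ((x : ℝ) * H2 + 2 * z * a) - 2 * z < 0 ∧
      (n : ℝ) * ((x : ℝ) * H2 + 2 * z * a) - H2 < 0 ∧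
      (x : ℝ) * H2 + 2 * z * a > 0 := by
  have hnax : 1 ≤ n * (a + x) := Int.mul_pos (Int.natCast_pos.2 hn) (by lia)
  exact (enriques_stability_range_x_neg_general (Nat.cast_pos.2 hn) (Int.cast_lt_zero.2 hx)
    (mod_cast hnax) hH2).imp_right fun h z hlower hupper ↦ (h z).1 ⟨hlower, hupper⟩
end

section
/- Let n be a positive integer, let x, a, c be integers with 0 < x < −a and c ≥ 1, and let h > 0 be a real number. Set L := n·x·h²·c/(n·(x·c − a) + 1) and U := x·h²·c/(x·c − a). Then 0 < L < U < h²; there exists a real z with 0 < z < h and L < (2·h − z)·z < U; and for every real z with 0 < z < h and L < (2·h − z)·z < U the following three inequalities hold simultaneously: n·x·h²·c + (n·a − 1 − n·x·c)·(2·h − z)·z < 0, (n·x − 1)·h²·c + (n·a + c − n·x·c)·(2·h − z)·z < 0, and x·h²·c + (a − x·c)·(2·h − z)·z > 0. -/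
/-!
With `σ² = -σ · π*c₁`, the degree of `D = xσ + π*α` is `μ = D · J² = xc(h² - q) + aq`, where
`q = (2h - z)z = h² - ζ²`, and `σ · J² = c(h² - q)`. The three slope inequalities then say `nμ < q`,
`nμ < σ · J²` and `0 < μ`. As `μ` is affine in `q`, the first is `L < q` and the last is `q < U`.
The second comes for free: when `x ≤ -a`, positivity of `μ` forces `q < σ · J²`, hence
`nμ < q < σ · J²`.
-/

open Set

section OrderedField

variable {K : Type*} [Field K]

/-- The degree `D · J²` of the divisor `D = xσ + π*α` on the elliptic threefold, where `a = α · c₁`,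
`c = c₁²`, and the polarization `J = zσ + h π*c₁` enters through `h` and `q = (2h - z)z`. -/
def divisorDegree (x a c h q : K) : K :=
  x * h ^ 2 * c + (a - x * c) * q

/-- The lower end `L` of the range of `q = (2h - z)z` for which the rank `n + 1` extension is
stable: the solution of `n * divisorDegree x a c h q = q`. -/
def stabilityLower (n x a c h : K) : K :=
  n * x * h ^ 2 * c / (n * (x * c - a) + 1)

/-- The upper end `U` of the range of `q = (2h - z)z` for which the extension is stable:
the zero of `divisorDegree x a c h`. -/
def stabilityUpper (x a c h : K) : K :=
  x * h ^ 2 * c / (x * c - a)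

variable [LinearOrder K] [IsStrictOrderedRing K] {n x a c h q : K}

lemma mul_divisorDegree_lt_self_iff (hden : 0 < n * (x * c - a) + 1) :
    n * divisorDegree x a c h q < q ↔ stabilityLower n x a c h < q := by
  rw [stabilityLower, div_lt_iff₀ hden, divisorDegree]
  constructor <;> intro _ <;> linarith

lemma divisorDegree_pos_iff (hden : 0 < x * c - a) :
    0 < divisorDegree x a c h q ↔ q < stabilityUpper x a c h := by
  rw [stabilityUpper, lt_div_iff₀ hden, divisorDegree]
  constructor <;> intro _ <;> linarith

lemma lt_mul_sq_sub_of_divisorDegree_pos (hx : 0 < x) (hxa : x ≤ -a) (hq : 0 ≤ q)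
    (hdeg : 0 < divisorDegree x a c h q) : q < c * (h ^ 2 - q) := by
  refine lt_of_mul_lt_mul_left ?_ hx.le
  calc x * q ≤ -a * q := by gcongr
    _ < divisorDegree x a c h q + -a * q := lt_add_of_pos_left _ hdeg
    _ = x * (c * (h ^ 2 - q)) := by rw [divisorDegree]; ring

lemma stabilityLower_pos (hn : 0 < n) (hx : 0 < x) (hc : 0 < c) (hh : h ≠ 0)
    (hden : 0 < x * c - a) : 0 < stabilityLower n x a c h := by
  rw [stabilityLower]
  positivity

lemma stabilityLower_lt_stabilityUpper (hx : 0 < x) (hc : 0 < c) (hh : h ≠ 0)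
    (hden : 0 < x * c - a) (hden' : 0 < n * (x * c - a) + 1) :
    stabilityLower n x a c h < stabilityUpper x a c h := by
  have hnum : 0 < x * h ^ 2 * c := by positivity
  rw [stabilityLower, stabilityUpper, div_lt_div_iff₀ hden' hden]
  linarith

lemma stabilityUpper_lt_sq (ha : a < 0) (hh : h ≠ 0) (hden : 0 < x * c - a) :
    stabilityUpper x a c h < h ^ 2 := by
  rw [stabilityUpper, div_lt_iff₀ hden]
  linarith [mul_neg_of_pos_of_neg (sq_pos_of_ne_zero hh) ha]

theorem stability_range_iff_slope_inequalities (hn : 0 < n) (hx : 0 < x)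
    (hxa : x ≤ -a) (hc : 0 < c) (hh : h ≠ 0) :
    (stabilityLower n x a c h < q ∧ q < stabilityUpper x a c h) ↔
      n * x * h ^ 2 * c + (n * a - 1 - n * x * c) * q < 0 ∧
        (n * x - 1) * h ^ 2 * c + (n * a + c - n * x * c) * q < 0 ∧
        x * h ^ 2 * c + (a - x * c) * q > 0 := by
  have hden : 0 < x * c - a := by linarith [mul_pos hx hc]
  have mul_degree_lt_iff : n * x * h ^ 2 * c + (n * a - 1 - n * x * c) * q < 0 ↔
      n * divisorDegree x a c h q < q := by
    rw [divisorDegree]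
    constructor <;> intro _ <;> linarith
  have mul_degree_lt_section_iff : (n * x - 1) * h ^ 2 * c + (n * a + c - n * x * c) * q < 0 ↔
      n * divisorDegree x a c h q < c * (h ^ 2 - q) := by
    rw [divisorDegree]
    constructor <;> intro _ <;> linarith
  rw [mul_degree_lt_iff, mul_degree_lt_section_iff, gt_iff_lt, ← divisorDegree,
    mul_divisorDegree_lt_self_iff (by positivity), divisorDegree_pos_iff hden]
  refine ⟨fun ⟨hL, hU⟩ ↦ ⟨hL, ?_, hU⟩, fun ⟨hL, _, hU⟩ ↦ ⟨hL, hU⟩⟩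
  have hq : 0 < q := (stabilityLower_pos hn hx hc hh hden).trans hL
  calc n * divisorDegree x a c h q < q := (mul_divisorDegree_lt_self_iff (by positivity)).2 hL
    _ < c * (h ^ 2 - q) :=
      lt_mul_sq_sub_of_divisorDegree_pos hx hxa hq.le ((divisorDegree_pos_iff hden).2 hU)

end OrderedField

lemma Ioo_zero_sq_subset_image_two_mul_sub_mul {h : ℝ} (hh : 0 ≤ h) :
    Ioo 0 (h ^ 2) ⊆ (fun z ↦ (2 * h - z) * z) '' Ioo 0 h := by
  have hcont : ContinuousOn (fun z ↦ (2 * h - z) * z) (Icc 0 h) := by fun_prop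
  have hright : (2 * h - h) * h = h ^ 2 := by ring
  simpa only [mul_zero, hright] using intermediate_value_Ioo hh hcont

theorem delPezzo_stability_range_x_pos_general {n x a c h : ℝ} (hn : 0 < n) (hx : 0 < x)
    (hxa : x ≤ -a) (hc : 0 < c) (hh : 0 < h) :
    (0 < stabilityLower n x a c h ∧ stabilityLower n x a c h < stabilityUpper x a c h ∧
      stabilityUpper x a c h < h ^ 2) ∧
    (∃ z : ℝ, 0 < z ∧ z < h ∧
      stabilityLower n x a c h < (2 * h - z) * z ∧ (2 * h - z) * z < stabilityUpper x a c h) ∧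
    ∀ z : ℝ, (stabilityLower n x a c h < (2 * h - z) * z ∧
        (2 * h - z) * z < stabilityUpper x a c h) ↔
      n * x * h ^ 2 * c + (n * a - 1 - n * x * c) * ((2 * h - z) * z) < 0 ∧
        (n * x - 1) * h ^ 2 * c + (n * a + c - n * x * c) * ((2 * h - z) * z) < 0 ∧
        x * h ^ 2 * c + (a - x * c) * ((2 * h - z) * z) > 0 := by
  have hden : 0 < x * c - a := by linarith [mul_pos hx hc]
  have hL := stabilityLower_pos hn hx hc hh.ne' hden
  have hLU : stabilityLower n x a c h < stabilityUpper x a c h :=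
    stabilityLower_lt_stabilityUpper hx hc hh.ne' hden (by positivity)
  have hU : stabilityUpper x a c h < h ^ 2 := stabilityUpper_lt_sq (by linarith) hh.ne' hden
  refine ⟨⟨hL, hLU, hU⟩, ?_, fun z ↦ stability_range_iff_slope_inequalities hn hx hxa hc hh.ne'⟩
  obtain ⟨q, hLq, hqU⟩ := exists_between hLU
  obtain ⟨z, ⟨hz, hzh⟩, rfl⟩ :=
    Ioo_zero_sq_subset_image_two_mul_sub_mul hh.le ⟨hL.trans hLq, hqU.trans hU⟩
  exact ⟨z, hz, hzh, hLq, hqU⟩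

/-- Numerical core of Proposition 5.2(i): for `0 < x < -a`, `c ≥ 1`, `h > 0`, with
`L = n·x·h²·c/(n·(x·c − a) + 1)` and `U = x·h²·c/(x·c − a)`, one has `0 < L < U < h²`,
some `z ∈ (0, h)` satisfies `L < (2h − z)z < U`, and every such `z` satisfies the three
slope inequalities. -/
theorem delPezzo_stability_range_x_pos (n : ℕ) (hn : 0 < n) (x a c : ℤ)
    (hx : 0 < x) (hxa : x < -a) (hc : 1 ≤ c) (h : ℝ) (hh : 0 < h) :
    (0 < (n : ℝ) * x * h ^ 2 * c / ((n : ℝ) * ((x : ℝ) * c - a) + 1) ∧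
      (n : ℝ) * x * h ^ 2 * c / ((n : ℝ) * ((x : ℝ) * c - a) + 1) <
        (x : ℝ) * h ^ 2 * c / ((x : ℝ) * c - a) ∧
      (x : ℝ) * h ^ 2 * c / ((x : ℝ) * c - a) < h ^ 2) ∧
    (∃ z : ℝ, 0 < z ∧ z < h ∧
      (n : ℝ) * x * h ^ 2 * c / ((n : ℝ) * ((x : ℝ) * c - a) + 1) < (2 * h - z) * z ∧
      (2 * h - z) * z < (x : ℝ) * h ^ 2 * c / ((x : ℝ) * c - a)) ∧
    ∀ z : ℝ, 0 < z → z < h →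
      (n : ℝ) * x * h ^ 2 * c / ((n : ℝ) * ((x : ℝ) * c - a) + 1) < (2 * h - z) * z →
      (2 * h - z) * z < (x : ℝ) * h ^ 2 * c / ((x : ℝ) * c - a) →
      ((n : ℝ) * x * h ^ 2 * c + ((n : ℝ) * a - 1 - (n : ℝ) * x * c) * ((2 * h - z) * z) < 0 ∧
       ((n : ℝ) * x - 1) * h ^ 2 * c + ((n : ℝ) * a + c - (n : ℝ) * x * c) * ((2 * h - z) * z) < 0 ∧
       (x : ℝ) * h ^ 2 * c + ((a : ℝ) - x * c) * ((2 * h - z) * z) > 0) := by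
  obtain ⟨hends, hex, hiff⟩ := delPezzo_stability_range_x_pos_general (n := n) (x := x) (a := a)
    (c := c) (mod_cast hn) (mod_cast hx) (mod_cast hxa.le) (mod_cast hc) hh
  exact ⟨hends, hex, fun z _ _ hL hU ↦ (hiff z).1 ⟨hL, hU⟩⟩
end

section
/- Let n be a positive integer, let x, a, c be integers with −a < x < 0 and c ≥ 1, and let h > 0 be a real number. Set L := x·h²·c/(x·c − a) and U := n·x·h²·c/(n·(x·c − a) + 1). Then 0 < L < U < h²; there exists a real z with 0 < z < h and L < (2·h − z)·z < U; and for every real z with 0 < z < h and L < (2·h − z)·z < U the following three inequalities hold simultaneously: n·x·h²·c + (n·a − 1 − n·x·c)·(2·h − z)·z < 0, (n·x − 1)·h²·c + (n·a + c − n·x·c)·(2·h − z)·z < 0, and x·h²·c + (a − x·c)·(2·h − z)·z > 0. -/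
/-!
For `D = xσ + π*α` and `J = zσ + π*H`, the relation `σ² = -σ·c₁` makes `D·J²` affine in
`w = (2h - z)z`, namely `D·J² = x·h²·c + (a - x·c)·w`. With a class `β` on the base such that
`β·c₁ = 1`, the three inequalities read `(nD - π*β)·J² < 0`, `(nD - σ)·J² < 0` and `D·J² > 0`.
Each of them compares `w` with the value at which the degree changes sign. For `x < 0 < a` this
value is increasing in `-x / a`; hence `L < U`, and the bound on `w` coming from `nD - σ` is
implied by `w < U` as soon as `n(a + x) ≥ 1`.
-/

section Degree

variable {K : Type*} [Field K]

/-- The degree `D·J²` of `D = xσ + π*α` with respect to `J = zσ + π*H`, where `a = α·c₁` and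
`c = c₁²`. It depends on `H = h·c₁` and on `z` only through `s = h²` and `w = (2h - z)z`. -/
def polarizedDegree (x a c s w : K) : K :=
  x * s * c + (a - x * c) * w

/-- The value of `w` at which `polarizedDegree x a c s w` vanishes. This is the junk value `0`
when `x * c = a`, where the degree does not depend on `w`. -/
def degreeWall (x a c s : K) : K :=
  x * s * c / (x * c - a)

lemma polarizedDegree_eq_sub_mul (x a c s w : K) :
    polarizedDegree x a c s w = x * s * c - w * (x * c - a) := by
  rw [polarizedDegree]
  ring

variable [LinearOrder K] [IsStrictOrderedRing K] {n x y a b c s w : K}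

lemma polarizedDegree_pos_iff (hxa : x * c < a) :
    0 < polarizedDegree x a c s w ↔ degreeWall x a c s < w := by
  rw [polarizedDegree_eq_sub_mul, sub_pos, degreeWall, div_lt_iff_of_neg (sub_neg.2 hxa)]

lemma polarizedDegree_neg_iff (hxa : x * c < a) :
    polarizedDegree x a c s w < 0 ↔ w < degreeWall x a c s := by
  rw [polarizedDegree_eq_sub_mul, sub_neg, degreeWall, lt_div_iff_of_neg (sub_neg.2 hxa)]

lemma degreeWall_pos_iff (hsc : 0 < s * c) (hxa : x * c < a) :
    0 < degreeWall x a c s ↔ x < 0 := by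
  rw [degreeWall, lt_div_iff_of_neg (sub_neg.2 hxa), zero_mul, mul_assoc,
    ← not_le, mul_nonneg_iff_of_pos_right hsc, not_le]

lemma degreeWall_lt_iff (hs : 0 < s) (hxa : x * c < a) :
    degreeWall x a c s < s ↔ 0 < a := by
  have hdeg : polarizedDegree x a c s s = a * s := by
    rw [polarizedDegree]
    ring
  rw [← polarizedDegree_pos_iff hxa, hdeg, mul_pos_iff_of_pos_right hs]

lemma degreeWall_lt_degreeWall_iff (hsc : 0 < s * c) (hxa : x * c < a) (hyb : y * c < b) :
    degreeWall x a c s < degreeWall y b c s ↔ a * y < b * x := by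
  have hcross : x * s * c * (b - y * c) - y * s * c * (a - x * c) =
      (b * x - a * y) * (s * c) := by ring
  rw [degreeWall, degreeWall, ← neg_sub a, ← neg_sub b, div_neg, div_neg, neg_lt_neg_iff,
    div_lt_div_iff₀ (sub_pos.2 hyb) (sub_pos.2 hxa), ← sub_pos, hcross,
    mul_pos_iff_of_pos_right hsc, sub_pos]

lemma degreeWall_le_degreeWall_iff (hsc : 0 < s * c) (hxa : x * c < a) (hyb : y * c < b) :
    degreeWall x a c s ≤ degreeWall y b c s ↔ a * y ≤ b * x := by
  rw [← not_lt, degreeWall_lt_degreeWall_iff hsc hyb hxa, not_lt]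

lemma degreeWall_lt_degreeWall_mul_sub_one (hsc : 0 < s * c) (hx : x < 0) (hxa : x * c < a)
    (hnxa : n * x * c < n * a - 1) :
    degreeWall x a c s < degreeWall (n * x) (n * a - 1) c s := by
  rw [degreeWall_lt_degreeWall_iff hsc hxa hnxa]
  linarith

lemma degreeWall_sub_one_right_le_sub_one_left (hsc : 0 < s * c) (hxa : x * c < a - 1)
    (hxa' : (x - 1) * c < a) (h1 : 1 ≤ a + x) :
    degreeWall x (a - 1) c s ≤ degreeWall (x - 1) a c s := by
  rw [degreeWall_le_degreeWall_iff hsc hxa hxa']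
  linarith

lemma degreeWall_lt_and_lt_degreeWall_iff (hsc : 0 < s * c) (hxa : x * c < a)
    (hnxa : n * x * c < n * a - 1) (hnxa' : (n * x - 1) * c < n * a) (hna : 1 ≤ n * (a + x)) :
    degreeWall x a c s < w ∧ w < degreeWall (n * x) (n * a - 1) c s ↔
      polarizedDegree (n * x) (n * a - 1) c s w < 0 ∧
        polarizedDegree (n * x - 1) (n * a) c s w < 0 ∧ 0 < polarizedDegree x a c s w := by
  rw [polarizedDegree_neg_iff hnxa, polarizedDegree_neg_iff hnxa', polarizedDegree_pos_iff hxa]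
  have hle := degreeWall_sub_one_right_le_sub_one_left hsc hnxa hnxa' (by rwa [← mul_add])
  exact ⟨fun ⟨hL, hU⟩ ↦ ⟨hU, hU.trans_le hle, hL⟩, fun ⟨hU, _, hL⟩ ↦ ⟨hL, hU⟩⟩

end Degree

lemma exists_mem_Ioo_two_mul_sub_mul_self_eq {h w : ℝ} (hh : 0 ≤ h) (hw : w ∈ Set.Ioo 0 (h ^ 2)) :
    ∃ z ∈ Set.Ioo 0 h, (2 * h - z) * z = w := by
  have hcont : Continuous fun z ↦ (2 * h - z) * z := by fun_prop
  have hends : Set.Ioo 0 (h ^ 2) = Set.Ioo ((2 * h - 0) * 0) ((2 * h - h) * h) := by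
    congr 1 <;> ring
  exact intermediate_value_Ioo hh hcont.continuousOn (hends ▸ hw)

theorem delPezzo_stability_range_x_neg_general {n x a c h : ℝ} (hn : 0 < n) (hx : x < 0)
    (hc : 0 < c) (hh : 0 < h) (hna : 1 ≤ n * (a + x)) :
    (0 < x * h ^ 2 * c / (x * c - a) ∧
      x * h ^ 2 * c / (x * c - a) < n * x * h ^ 2 * c / (n * (x * c - a) + 1) ∧
      n * x * h ^ 2 * c / (n * (x * c - a) + 1) < h ^ 2) ∧
    (∃ z, 0 < z ∧ z < h ∧
      x * h ^ 2 * c / (x * c - a) < (2 * h - z) * z ∧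
      (2 * h - z) * z < n * x * h ^ 2 * c / (n * (x * c - a) + 1)) ∧
    ∀ z, x * h ^ 2 * c / (x * c - a) < (2 * h - z) * z ∧
        (2 * h - z) * z < n * x * h ^ 2 * c / (n * (x * c - a) + 1) ↔
      n * x * h ^ 2 * c + (n * a - 1 - n * x * c) * ((2 * h - z) * z) < 0 ∧
        (n * x - 1) * h ^ 2 * c + (n * a + c - n * x * c) * ((2 * h - z) * z) < 0 ∧
        x * h ^ 2 * c + (a - x * c) * ((2 * h - z) * z) > 0 := by
  have hs : 0 < h ^ 2 := by positivity
  have hsc : 0 < h ^ 2 * c := by positivity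
  have hnx : n * x < 0 := mul_neg_of_pos_of_neg hn hx
  have hnxc : n * x * c < 0 := mul_neg_of_neg_of_pos hnx hc
  have hna_pos : 0 < n * a - 1 := by linarith
  have hnxa : n * x * c < n * a - 1 := hnxc.trans hna_pos
  have hnxa' : (n * x - 1) * c < n * a := by linarith
  have hxa : x * c < a := by
    refine lt_of_mul_lt_mul_left ?_ hn.le
    linarith
  have hU : n * (x * c - a) + 1 = n * x * c - (n * a - 1) := by ring
  have hdeg : n * a + c - n * x * c = n * a - (n * x - 1) * c := by ring
  rw [hU, hdeg]
  have hL_pos := (degreeWall_pos_iff hsc hxa).2 hx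
  have hLU := degreeWall_lt_degreeWall_mul_sub_one hsc hx hxa hnxa
  have hU_lt := (degreeWall_lt_iff hs hnxa).2 hna_pos
  obtain ⟨w, hLw, hwU⟩ := exists_between hLU
  obtain ⟨z, ⟨hz, hzh⟩, rfl⟩ :=
    exists_mem_Ioo_two_mul_sub_mul_self_eq hh.le ⟨hL_pos.trans hLw, hwU.trans hU_lt⟩
  exact ⟨⟨hL_pos, hLU, hU_lt⟩, ⟨z, hz, hzh, hLw, hwU⟩,
    fun _ ↦ degreeWall_lt_and_lt_degreeWall_iff hsc hxa hnxa hnxa' hna⟩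

/-- Numerical core of Proposition 5.2(ii): for `−a < x < 0`, `c ≥ 1`, `h > 0`, with
`L = x·h²·c/(x·c − a)` and `U = n·x·h²·c/(n·(x·c − a) + 1)`, one has `0 < L < U < h²`,
some `z ∈ (0, h)` satisfies `L < (2h − z)z < U`, and every such `z` satisfies the three
slope inequalities. -/
theorem delPezzo_stability_range_x_neg (n : ℕ) (hn : 0 < n) (x a c : ℤ)
    (hax : -a < x) (hx : x < 0) (hc : 1 ≤ c) (h : ℝ) (hh : 0 < h) :
    (0 < (x : ℝ) * h ^ 2 * c / ((x : ℝ) * c - a) ∧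
      (x : ℝ) * h ^ 2 * c / ((x : ℝ) * c - a) <
        (n : ℝ) * x * h ^ 2 * c / ((n : ℝ) * ((x : ℝ) * c - a) + 1) ∧
      (n : ℝ) * x * h ^ 2 * c / ((n : ℝ) * ((x : ℝ) * c - a) + 1) < h ^ 2) ∧
    (∃ z : ℝ, 0 < z ∧ z < h ∧
      (x : ℝ) * h ^ 2 * c / ((x : ℝ) * c - a) < (2 * h - z) * z ∧
      (2 * h - z) * z < (n : ℝ) * x * h ^ 2 * c / ((n : ℝ) * ((x : ℝ) * c - a) + 1)) ∧
    ∀ z : ℝ, 0 < z → z < h →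
      (x : ℝ) * h ^ 2 * c / ((x : ℝ) * c - a) < (2 * h - z) * z →
      (2 * h - z) * z < (n : ℝ) * x * h ^ 2 * c / ((n : ℝ) * ((x : ℝ) * c - a) + 1) →
      ((n : ℝ) * x * h ^ 2 * c + ((n : ℝ) * a - 1 - (n : ℝ) * x * c) * ((2 * h - z) * z) < 0 ∧
       ((n : ℝ) * x - 1) * h ^ 2 * c + ((n : ℝ) * a + c - (n : ℝ) * x * c) * ((2 * h - z) * z) < 0 ∧
       (x : ℝ) * h ^ 2 * c + ((a : ℝ) - x * c) * ((2 * h - z) * z) > 0) := by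
  have hna : 0 < (n : ℤ) * (a + x) := mul_pos (by exact_mod_cast hn) (by lia)
  obtain ⟨hLU, hz, hiff⟩ := delPezzo_stability_range_x_neg_general (a := a) (c := c)
    (Nat.cast_pos.2 hn) (Int.cast_lt_zero.2 hx) (by exact_mod_cast hc) hh
    (by exact_mod_cast Int.add_one_le_of_lt hna)
  exact ⟨hLU, hz, fun z _ _ hL hU ↦ (hiff z).1 ⟨hL, hU⟩⟩
end
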